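/- Let λ ∈ ℝ and μ ≠ 0, and let C_{ijkl} = λδ_{ij}δ_{kl} + μ(δ_{ik}δ_{jl} + δ_{il}δ_{jk}) be the 2-dimensional isotropic (Lamé) elasticity tensor, which satisfies both the major symmetry C_{ijkl} = C_{klij} and the minor symmetry C_{ijkl} = C_{jikl}. Let M = diag(m₁, m₂) with m₁, m₂ > 0 and m₁ ≠ m₂. Then the push-forward tensor C̃_{iqkp} = (1/det M) Σ_{j,l} C_{ijkl} M_{pl} M_{qj} satisfies C̃₁₂₁₂ = (m₂/m₁) μ and C̃₂₁₁₂ = μ; since m₁ ≠ m₂ and μ ≠ 0 these are different, so C̃ fails the minor symmetry: the minor symmetric structure of the isotropic elasticity tensor breaks under coordinate transformation. -/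

import Mathlib

/-- The Kronecker delta. -/
noncomputable def kron {N : ℕ} (i j : Fin N) : ℝ := if i = j then 1 else 0

/-- The isotropic (Lamé) elasticity tensor
`C_{ijkl} = λ δ_{ij} δ_{kl} + μ (δ_{ik} δ_{jl} + δ_{il} δ_{jk})`. -/
noncomputable def lameTensor {N : ℕ} (lam mu : ℝ) :
    Fin N → Fin N → Fin N → Fin N → ℝ :=
  fun i j k l =>
    lam * kron i j * kron k l + mu * (kron i k * kron j l + kron i l * kron j k)

/-- The push-forward of a four-index tensor `C` by an invertible matrix `M`:
`C̃_{iqkp} = (1/det M) Σ_{j,l} C_{ijkl} M_{pl} M_{qj}`. -/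
noncomputable def pushForward {N : ℕ} (C : Fin N → Fin N → Fin N → Fin N → ℝ)
    (M : Matrix (Fin N) (Fin N) ℝ) : Fin N → Fin N → Fin N → Fin N → ℝ :=
  fun i q k p => (1 / M.det) * ∑ j, ∑ l, C i j k l * M p l * M q j

/-!
Pushing forward by an invertible `diag d` multiplies the component `C_{iqkp}` by `d_q d_p / det`.
This factor is not symmetric in `i` and `q`, so when `d_i ≠ d_q` every nonzero component
`C_{iqkp} = C_{qikp}` acquires two different values; for the Lamé tensor the shear component
`C_{iqiq} = μ` is one.
-/

section ElasticityTensors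

variable {N : ℕ}

/-- The major symmetry `C_{ijkl} = C_{klij}` of a four-index tensor. -/
def MajorSymmetric (C : Fin N → Fin N → Fin N → Fin N → ℝ) : Prop :=
  ∀ i j k l, C i j k l = C k l i j

/-- The minor symmetry `C_{ijkl} = C_{jikl}` of a four-index tensor, in its first index pair. -/
def MinorSymmetric (C : Fin N → Fin N → Fin N → Fin N → ℝ) : Prop :=
  ∀ i j k l, C i j k l = C j i k l

lemma kron_comm (i j : Fin N) : kron i j = kron j i := by
  simp only [kron, eq_comm]

lemma majorSymmetric_lameTensor (lam mu : ℝ) :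
    MajorSymmetric (lameTensor (N := N) lam mu) := by
  intro i j k l
  simp only [lameTensor, kron_comm k i, kron_comm l j, kron_comm k j, kron_comm l i]
  ring

lemma minorSymmetric_lameTensor (lam mu : ℝ) :
    MinorSymmetric (lameTensor (N := N) lam mu) := by
  intro i j k l
  simp only [lameTensor, kron_comm j i]
  ring

lemma lameTensor_shear_component (lam mu : ℝ) {i q : Fin N} (hiq : i ≠ q) :
    lameTensor lam mu i q i q = mu := by
  simp [lameTensor, kron, hiq]

variable (C : Fin N → Fin N → Fin N → Fin N → ℝ) (d : Fin N → ℝ)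

lemma pushForward_diagonal (i q k p : Fin N) :
    pushForward C (Matrix.diagonal d) i q k p = d q * d p / (∏ j, d j) * C i q k p := by
  have hsum : ∑ j, ∑ l, C i j k l * Matrix.diagonal d p l * Matrix.diagonal d q j
      = C i q k p * d p * d q := by
    rw [Finset.sum_comm]
    simp [Matrix.diagonal_apply]
  rw [pushForward, hsum, Matrix.det_diagonal]
  ring

variable {C d}

lemma pushForward_diagonal_swap_iff (hC : MinorSymmetric C) (hd : ∀ j, d j ≠ 0)
    (i q k p : Fin N) :
    pushForward C (Matrix.diagonal d) i q k p = pushForward C (Matrix.diagonal d) q i k p ↔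
      d i = d q ∨ C i q k p = 0 := by
  have hdet : ∏ j, d j ≠ 0 := Finset.prod_ne_zero_iff.mpr fun j _ => hd j
  rw [pushForward_diagonal, pushForward_diagonal, ← hC i q k p, mul_eq_mul_right_iff,
    div_left_inj' hdet, mul_left_inj' (hd p), eq_comm (a := d q)]

end ElasticityTensors

theorem lame_minor_symmetry_breaks_general {N : ℕ} (lam mu : ℝ) (hmu : mu ≠ 0)
    (d : Fin N → ℝ) (hd : ∀ j, d j ≠ 0) {i q : Fin N} (hne : d i ≠ d q) :
    MajorSymmetric (lameTensor (N := N) lam mu) ∧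
    MinorSymmetric (lameTensor (N := N) lam mu) ∧
    pushForward (lameTensor lam mu) (Matrix.diagonal d) i q i q
      = d q * d q / (∏ j, d j) * mu ∧
    pushForward (lameTensor lam mu) (Matrix.diagonal d) q i i q
      = d i * d q / (∏ j, d j) * mu ∧
    pushForward (lameTensor lam mu) (Matrix.diagonal d) i q i q
      ≠ pushForward (lameTensor lam mu) (Matrix.diagonal d) q i i q := by
  have hminor := minorSymmetric_lameTensor (N := N) lam mu
  have hshear : lameTensor lam mu i q i q = mu :=
    lameTensor_shear_component lam mu (ne_of_apply_ne d hne)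
  refine ⟨majorSymmetric_lameTensor lam mu, hminor, ?_, ?_, ?_⟩
  · rw [pushForward_diagonal, hshear]
  · rw [pushForward_diagonal, ← hminor i q i q, hshear]
  · rw [Ne, pushForward_diagonal_swap_iff hminor hd, hshear]
    exact not_or.mpr ⟨hne, hmu⟩

/-- the 2-dimensional isotropic Lamé tensor is major and minor symmetric,
but its push-forward by `M = diag(m₁, m₂)` with `m₁ ≠ m₂` and `μ ≠ 0` satisfies
`C̃₁₂₁₂ = (m₂/m₁) μ ≠ μ = C̃₂₁₁₂`: the minor symmetry breaks under coordinate
transformation. -/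
theorem lame_minor_symmetry_breaks (lam mu : ℝ) (hmu : mu ≠ 0)
    (m₁ m₂ : ℝ) (hm₁ : 0 < m₁) (hm₂ : 0 < m₂) (hne : m₁ ≠ m₂) :
    (∀ i j k l : Fin 2, lameTensor lam mu i j k l = lameTensor lam mu k l i j) ∧
    (∀ i j k l : Fin 2, lameTensor lam mu i j k l = lameTensor lam mu j i k l) ∧
    pushForward (lameTensor lam mu) (Matrix.diagonal ![m₁, m₂]) 0 1 0 1
      = (m₂ / m₁) * mu ∧
    pushForward (lameTensor lam mu) (Matrix.diagonal ![m₁, m₂]) 1 0 0 1 = mu ∧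
    pushForward (lameTensor lam mu) (Matrix.diagonal ![m₁, m₂]) 0 1 0 1
      ≠ pushForward (lameTensor lam mu) (Matrix.diagonal ![m₁, m₂]) 1 0 0 1 := by
  have hd : ∀ j, ![m₁, m₂] j ≠ 0 := by simp [Fin.forall_fin_two, hm₁.ne', hm₂.ne']
  simpa [MajorSymmetric, MinorSymmetric, Fin.prod_univ_two, mul_div_mul_right, hm₁.ne', hm₂.ne']
    using lame_minor_symmetry_breaks_general lam mu hmu ![m₁, m₂] hd (i := 0) (q := 1) hne
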